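/- Let f be superquadratic on [0,∞). For i = 1,...,k, let x_{ij} ≥ 0 and p_{ij} > 0 (j = 1,...,n_i) with ∑_j p_{ij} = 1 for each i, and q_i > 0 with ∑_i q_i = 1. Set x̄ = ∑_i q_i ∑_j p_{ij} x_{ij}. Then ∑_{j_1,...,j_k} p_{1j_1}···p_{kj_k} f(∑_{i=1}^k q_i x_{i j_i}) - f(x̄) ≥ ∑_{j_1,...,j_k} p_{1j_1}···p_{kj_k} f(|∑_{i=1}^k q_i x_{i j_i} - x̄|). -/

import Mathlib

theorem sum_pi_prod_aux {k : ℕ} {ι : Fin k → Type*} [∀ i, Fintype (ι i)]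
    (g : (i : Fin k) → ι i → ℝ) :
    ∑ t : (i : Fin k) → ι i, ∏ i, g i (t i) = ∏ i, ∑ j, g i j := by
  rw [Finset.prod_univ_sum, Fintype.piFinset_univ]

theorem sum_pi_marginal_aux {k : ℕ} {ι : Fin k → Type*} [∀ i, Fintype (ι i)]
    (x p : (i : Fin k) → ι i → ℝ) (hp1 : ∀ i, ∑ j, p i j = 1) (i : Fin k) :
    ∑ t : (i : Fin k) → ι i, (∏ l, p l (t l)) * x i (t i) = ∑ j, p i j * x i j := by
  have h := sum_pi_prod_aux (fun l j => p l j * (if l = i then x l j else 1))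
  simp only [Finset.prod_mul_distrib] at h
  have h2 : ∀ t : (i : Fin k) → ι i,
      ∏ l, (if l = i then x l (t l) else 1) = x i (t i) := by
    intro t
    simp
  simp only [h2] at h
  rw [h, Finset.prod_eq_single i]
  · simp
  · intro l _ hl
    simp [hl, hp1]
  · simp

theorem generalized_jensen_superquadratic (f : ℝ → ℝ)
    (hf : ∀ x ≥ (0:ℝ), ∃ C : ℝ, ∀ y ≥ (0:ℝ), f y - f x ≥ f |y - x| + C * (y - x))
    (k : ℕ) (ι : Fin k → Type*) [∀ i, Fintype (ι i)]
    (x p : (i : Fin k) → ι i → ℝ) (q : Fin k → ℝ)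
    (hx : ∀ i j, 0 ≤ x i j) (hp : ∀ i j, 0 < p i j)
    (hp1 : ∀ i, ∑ j, p i j = 1)
    (hq : ∀ i, 0 < q i) (hq1 : ∑ i, q i = 1) :
    let xbar := ∑ i, q i * ∑ j, p i j * x i j
    (∑ t : (i : Fin k) → ι i, (∏ i, p i (t i)) * f (∑ i, q i * x i (t i))) - f xbar ≥
      ∑ t : (i : Fin k) → ι i, (∏ i, p i (t i)) *
        f |(∑ i, q i * x i (t i)) - xbar| := by
  intro xbar
  have hxbar : 0 ≤ xbar := Finset.sum_nonneg fun i _ =>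
    mul_nonneg (hq i).le (Finset.sum_nonneg fun j _ => mul_nonneg (hp i j).le (hx i j))
  obtain ⟨C, hC⟩ := hf xbar hxbar
  have hw : ∑ t : (i : Fin k) → ι i, ∏ i, p i (t i) = 1 := by
    rw [sum_pi_prod_aux]; simp [hp1]
  have hm : ∑ t : (i : Fin k) → ι i, (∏ i, p i (t i)) * (∑ i, q i * x i (t i)) = xbar := by
    simp only [Finset.mul_sum]
    rw [Finset.sum_comm]
    refine Finset.sum_congr rfl fun i _ => ?_
    rw [← sum_pi_marginal_aux x p hp1 i, Finset.mul_sum]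
    exact Finset.sum_congr rfl fun t _ => by ring
  have key : ∑ t : (i : Fin k) → ι i, (∏ i, p i (t i)) *
        (f |(∑ i, q i * x i (t i)) - xbar| + C * ((∑ i, q i * x i (t i)) - xbar)) ≤
      ∑ t : (i : Fin k) → ι i, (∏ i, p i (t i)) * (f (∑ i, q i * x i (t i)) - f xbar) :=
    Finset.sum_le_sum fun t _ => mul_le_mul_of_nonneg_left
      (hC _ (Finset.sum_nonneg fun i _ => mul_nonneg (hq i).le (hx i _)))
      (Finset.prod_nonneg fun i _ => (hp i _).le)
  have e1 : ∑ t : (i : Fin k) → ι i, (∏ i, p i (t i)) *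
      (C * ((∑ i, q i * x i (t i)) - xbar)) = 0 := by
    have : ∀ t : (i : Fin k) → ι i, (∏ i, p i (t i)) * (C * ((∑ i, q i * x i (t i)) - xbar)) =
        C * ((∏ i, p i (t i)) * (∑ i, q i * x i (t i)) - (∏ i, p i (t i)) * xbar) :=
      fun t => by ring
    simp only [this]
    rw [← Finset.mul_sum, Finset.sum_sub_distrib, hm, ← Finset.sum_mul, hw]
    ring
  simp only [mul_add, mul_sub (∏ i, p i _) (f _)] at key
  rw [Finset.sum_add_distrib, e1, Finset.sum_sub_distrib, ← Finset.sum_mul, hw] at key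
  linarith
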